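/- (Claim 1.) For every n ≥ 1, μ((E₀ \ Eₙ⁻) ∪ Eₙ) = 1 − 2^{−n}. In particular, the value of the even-or-odd MDP(μ) is at least 1 − 2^{−n} for every n, hence equals 1. -/

import Mathlib

/-!
The set `W = (E 0 \ Eminus n) ∪ E n` meets `E 0` in `E 0 \ Eminus n`. Since `Eminus n + 1 = E n`,
translation invariance gives `φ (Eminus n) = 2⁻ⁿ`, so `mu0 φ W = 2 (1/2 - 2⁻ⁿ) = 1 - 2 · 2⁻ⁿ`.
On the other hand `E m ⊆ E n ⊆ W` for all `m ≥ n`, so `muN φ m W = 1` eventually, and a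
cluster point of the sequence must take the value `1` at `W`. Averaging gives `μ W = 1 - 2⁻ⁿ`.

These sets are admissible, and both `mu0 φ` and every `muN φ m` with `m ≥ 1` (hence `μstar`) are bounded by `1`,
so the supremum over admissible sets is `1`.
-/

open Filter Topology

/-- A charge (finitely additive probability measure) on ℕ. -/
def IsCharge (μ : Set ℕ → ℝ) : Prop :=
  μ ∅ = 0 ∧ μ Set.univ = 1 ∧ (∀ M : Set ℕ, 0 ≤ μ M) ∧
    ∀ M₁ M₂ : Set ℕ, Disjoint M₁ M₂ → μ (M₁ ∪ M₂) = μ M₁ + μ M₂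

/-- A diffuse charge: every singleton has measure zero. -/
def IsDiffuse (μ : Set ℕ → ℝ) : Prop :=
  IsCharge μ ∧ ∀ n : ℕ, μ {n} = 0

/-- Translation invariance: `μ(M) = μ(M + 1)` where `M + 1 = {n + 1 : n ∈ M}`. -/
def IsTransInv (μ : Set ℕ → ℝ) : Prop :=
  ∀ M : Set ℕ, μ M = μ ((· + 1) '' M)

/-- `E 0` is the set of odd numbers `{1,3,5,...}`; for `n ≥ 1`,
`E n = {k · 2ⁿ : k ≥ 1}`. -/
def E : ℕ → Set ℕ
  | 0 => {m | Odd m}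
  | n + 1 => {m | ∃ k : ℕ, 1 ≤ k ∧ m = k * 2 ^ (n + 1)}

/-- `μ₀(W) = 2 · φ(W ∩ E₀)`. -/
noncomputable def mu0 (φ : Set ℕ → ℝ) (W : Set ℕ) : ℝ := 2 * φ (W ∩ E 0)

/-- `μₙ(W) = 2ⁿ · φ(W ∩ Eₙ)`. -/
noncomputable def muN (φ : Set ℕ → ℝ) (n : ℕ) (W : Set ℕ) : ℝ := 2 ^ n * φ (W ∩ E n)

/-- A set of stages is admissible if for every `k ≥ 1` exactly one of `2k - 1`
and `2k` belongs to it. -/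
def Admissible (W : Set ℕ) : Prop :=
  ∀ k : ℕ, 1 ≤ k → Xor' (2 * k - 1 ∈ W) (2 * k ∈ W)

/-- `Eminus n = {k · 2ⁿ − 1 : k ≥ 1}`. -/
def Eminus (n : ℕ) : Set ℕ := {m | ∃ k : ℕ, 1 ≤ k ∧ m = k * 2 ^ n - 1}

lemma IsCharge.mono {φ : Set ℕ → ℝ} (hφ : IsCharge φ) {A B : Set ℕ} (h : A ⊆ B) : φ A ≤ φ B := by
  have h1 := hφ.2.2.2 A (B \ A) Set.disjoint_sdiff_right
  rw [Set.union_sdiff_cancel h] at h1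
  linarith [hφ.2.2.1 (B \ A)]

lemma IsCharge.diff {φ : Set ℕ → ℝ} (hφ : IsCharge φ) {A B : Set ℕ} (h : A ⊆ B) :
    φ (B \ A) = φ B - φ A := by
  have h1 := hφ.2.2.2 A (B \ A) Set.disjoint_sdiff_right
  rw [Set.union_sdiff_cancel h] at h1
  linarith

lemma mem_E_of_one_le {n : ℕ} (hn : 1 ≤ n) (m : ℕ) : m ∈ E n ↔ ∃ k : ℕ, 1 ≤ k ∧ m = k * 2 ^ n := by
  obtain ⟨n, rfl⟩ : ∃ j, n = j + 1 := ⟨n - 1, by omega⟩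
  rfl

lemma even_of_mem_E {n : ℕ} (hn : 1 ≤ n) {m : ℕ} (h : m ∈ E n) : Even m := by
  obtain ⟨k, -, rfl⟩ := (mem_E_of_one_le hn m).1 h
  exact ((Nat.even_pow' (by omega)).2 even_two).mul_left k

lemma E_anti {n m : ℕ} (hn : 1 ≤ n) (hnm : n ≤ m) : E m ⊆ E n := by
  intro x hx
  obtain ⟨k, hk, rfl⟩ := (mem_E_of_one_le (hn.trans hnm) x).1 hx
  refine (mem_E_of_one_le hn _).2 ⟨k * 2 ^ (m - n), Nat.mul_pos hk (by positivity), ?_⟩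
  rw [mul_assoc, ← pow_add, Nat.sub_add_cancel hnm]

lemma mem_Eminus_iff {n : ℕ} (hn : 1 ≤ n) (m : ℕ) : m ∈ Eminus n ↔ m + 1 ∈ E n := by
  rw [mem_E_of_one_le hn]
  refine exists_congr fun k => and_congr_right fun hk => ?_
  have : 0 < k * 2 ^ n := Nat.mul_pos hk (by positivity)
  omega

lemma image_Eminus {n : ℕ} (hn : 1 ≤ n) : (· + 1) '' Eminus n = E n := by
  ext m
  constructor
  · rintro ⟨j, hj, rfl⟩
    exact (mem_Eminus_iff hn j).1 hj
  · intro hm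
    obtain ⟨k, hk, rfl⟩ := (mem_E_of_one_le hn m).1 hm
    have : 0 < k * 2 ^ n := Nat.mul_pos hk (by positivity)
    exact ⟨k * 2 ^ n - 1, ⟨k, hk, rfl⟩, Nat.sub_add_cancel this⟩

lemma Eminus_subset {n : ℕ} (hn : 1 ≤ n) : Eminus n ⊆ E 0 := by
  intro m hm
  have := even_of_mem_E hn ((mem_Eminus_iff hn m).1 hm)
  change Odd m
  grind

lemma inter_E_zero {n : ℕ} (hn : 1 ≤ n) :
    ((E 0 \ Eminus n) ∪ E n) ∩ E 0 = E 0 \ Eminus n := by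
  ext m
  constructor
  · rintro ⟨h | h, h0⟩
    · exact h
    · exact absurd (even_of_mem_E hn h) (Nat.not_even_iff_odd.2 h0)
  · exact fun h => ⟨Or.inl h, h.1⟩

lemma admissible_union {n : ℕ} (hn : 1 ≤ n) : Admissible ((E 0 \ Eminus n) ∪ E n) := by
  intro k hk
  have hodd : Odd (2 * k - 1) := ⟨k - 1, by omega⟩
  have h1 : 2 * k - 1 ∈ (E 0 \ Eminus n) ∪ E n ↔ 2 * k ∉ E n := by
    have h2 : 2 * k - 1 ∉ E n := fun h => Nat.not_even_iff_odd.2 hodd (even_of_mem_E hn h)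
    have h3 : 2 * k - 1 ∈ E 0 := hodd
    have h4 := mem_Eminus_iff hn (2 * k - 1)
    rw [Nat.sub_add_cancel (by omega)] at h4
    simp only [Set.mem_union, Set.mem_sdiff, h2, h3, h4, true_and, or_false]
  have h5 : 2 * k ∈ (E 0 \ Eminus n) ∪ E n ↔ 2 * k ∈ E n := by
    have h6 : 2 * k ∉ E 0 := fun h : Odd (2 * k) => Nat.not_even_iff_odd.2 h (even_two_mul k)
    simp only [Set.mem_union, Set.mem_sdiff, h6, false_and, false_or]
  rw [h1, h5]
  by_cases h : 2 * k ∈ E n <;> simp [Xor', h]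

/-- Closed conditions on the value at a fixed `W` that hold eventually along the sequence pass to
cluster points, because evaluation at `W` is continuous for pointwise convergence. -/
lemma clusterPt_eval_mem {f : ℕ → Set ℕ → ℝ} {g : Set ℕ → ℝ} (h : MapClusterPt g atTop f)
    {S : Set ℝ} (hS : IsClosed S) (W : Set ℕ) (hf : ∀ᶠ n in atTop, f n W ∈ S) : g W ∈ S := by
  have hc : IsClosed {u : Set ℕ → ℝ | u W ∈ S} := hS.preimage (continuous_apply W)
  exact isClosed_iff_clusterPt.1 hc g (h.clusterPt.mono (le_principal_iff.2 hf))

theorem stmt_1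
    (φ : Set ℕ → ℝ) (hφ : IsCharge φ) (hφd : ∀ n : ℕ, φ {n} = 0)
    (hφt : IsTransInv φ)
    (hφE0 : φ (E 0) = 1 / 2)
    (hφEn : ∀ n : ℕ, 1 ≤ n → φ (E n) = (1 / 2 : ℝ) ^ n)
    (μstar : Set ℕ → ℝ)
    (hμstar : MapClusterPt μstar atTop (fun n => muN φ (n + 1)))
    (μ : Set ℕ → ℝ)
    (hμ : ∀ W : Set ℕ, μ W = (1 / 2) * mu0 φ W + (1 / 2) * μstar W) :
    (∀ n : ℕ, 1 ≤ n → μ ((E 0 \ Eminus n) ∪ E n) = 1 - (1 / 2 : ℝ) ^ n) ∧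
    sSup {x : ℝ | ∃ W : Set ℕ, Admissible W ∧ μ W = x} = 1 := by
  have hbound (W : Set ℕ) : μ W ≤ 1 := by
    have h0 : mu0 φ W ≤ 1 := by
      have := hφ.mono (Set.inter_subset_right : W ∩ E 0 ⊆ E 0)
      unfold mu0
      linarith
    have h1 : μstar W ≤ 1 := by
      refine clusterPt_eval_mem hμstar isClosed_Iic W (Eventually.of_forall fun n => ?_)
      have := hφ.mono (Set.inter_subset_right : W ∩ E (n + 1) ⊆ E (n + 1))
      rw [hφEn _ (by omega)] at this
      calc muN φ (n + 1) W ≤ 2 ^ (n + 1) * (1 / 2 : ℝ) ^ (n + 1) :=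
            mul_le_mul_of_nonneg_left this (by positivity)
        _ = 1 := by rw [← mul_pow]; norm_num
    rw [hμ]
    linarith
  have hval (n : ℕ) (hn : 1 ≤ n) : μ ((E 0 \ Eminus n) ∪ E n) = 1 - (1 / 2 : ℝ) ^ n := by
    have h0 : mu0 φ ((E 0 \ Eminus n) ∪ E n) = 2 * (1 / 2 - (1 / 2 : ℝ) ^ n) := by
      rw [mu0, inter_E_zero hn, hφ.diff (Eminus_subset hn), hφE0, hφt (Eminus n),
        image_Eminus hn, hφEn n hn]
    have h1 : μstar ((E 0 \ Eminus n) ∪ E n) = 1 := by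
      refine clusterPt_eval_mem hμstar (isClosed_singleton (x := (1 : ℝ))) _ ?_
      filter_upwards [eventually_ge_atTop n] with m hm
      have hsub : E (m + 1) ⊆ (E 0 \ Eminus n) ∪ E n :=
        (E_anti hn (by omega)).trans Set.subset_union_right
      rw [Set.mem_singleton_iff, muN, Set.inter_eq_self_of_subset_right hsub, hφEn _ (by omega),
        ← mul_pow]
      norm_num
    rw [hμ, h0, h1]
    ring
  refine ⟨hval, IsLUB.csSup_eq ⟨?_, ?_⟩ ⟨_, _, admissible_union le_rfl, rfl⟩⟩
  · rintro x ⟨W, -, rfl⟩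
    exact hbound W
  · intro b hb
    have hlim : Tendsto (fun n : ℕ => 1 - (1 / 2 : ℝ) ^ n) atTop (𝓝 (1 - 0)) :=
      (tendsto_pow_atTop_nhds_zero_of_lt_one (by norm_num) (by norm_num)).const_sub 1
    rw [sub_zero] at hlim
    refine le_of_tendsto hlim ?_
    filter_upwards [eventually_ge_atTop 1] with n hn
    exact hb ⟨_, admissible_union hn, hval n hn⟩
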